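/- Inner approximation of the set-valued buy price: let ε > 0, let k ∈ ℝ^q have all coordinates strictly positive, and let X¹,…,X^l ∈ A(x0) be such that V(x0, 0) ⊆ conv{U(X¹),…,U(X^l)} − ℝ^q_+ + ε·{k}. If p ∈ ℝ^d is such that for every i ∈ {1,…,l} there exists W^i ∈ A(x0 − p) with U(W^i + C) ≥ U(X^i) + ε·k (componentwise in ℝ^q), then p ∈ P^b(C). -/

import Mathlib

open Pointwise

/-!
The utility vectors attainable from the endowment `x₀ - p` with the claim `C` form a lower set,
which is convex because the expected utility is concave and `A(x₀ - p)` is convex. Translated by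
`-ε • k`, this set contains every `U(Xⁱ)`, hence their convex hull, hence everything below that
hull. Translating back, it contains the whole set `conv {U(Xⁱ)} - ℝ^q₊ + ε • k` that covers
`V(x₀, 0)`.
-/

open Set

section Concave

variable {𝕜 E F Ω ι κ : Type*}

theorem concaveOn_finsetSum [Semiring 𝕜] [PartialOrder 𝕜] [AddCommMonoid E] [Module 𝕜 E]
    [AddCommMonoid F] [PartialOrder F] [IsOrderedAddMonoid F] [Module 𝕜 F]
    {s : Set E} (hs : Convex 𝕜 s) {f : ι → E → F} {t : Finset ι}
    (hf : ∀ i ∈ t, ConcaveOn 𝕜 s (f i)) : ConcaveOn 𝕜 s (fun x ↦ ∑ i ∈ t, f i x) := by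
  refine ⟨hs, fun x hx y hy a b ha hb hab ↦ ?_⟩
  calc a • ∑ i ∈ t, f i x + b • ∑ i ∈ t, f i y
      = ∑ i ∈ t, (a • f i x + b • f i y) := by
        rw [Finset.smul_sum, Finset.smul_sum, Finset.sum_add_distrib]
    _ ≤ ∑ i ∈ t, f i (a • x + b • y) :=
        Finset.sum_le_sum fun i hi ↦ (hf i hi).2 hx hy ha hb hab

/-- The vector-valued expected utility of a random vector, with one component for each pair of a
utility function `u i` and a weight vector `Q j` on the states. -/
def expectedUtility [CommSemiring 𝕜] [Fintype Ω] (Q : κ → Ω → 𝕜) (u : ι → E → 𝕜)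
    (W : Ω → E) (ij : ι × κ) : 𝕜 :=
  ∑ ω, Q ij.2 ω * u ij.1 (W ω)

theorem concaveOn_expectedUtility [CommSemiring 𝕜] [PartialOrder 𝕜] [IsOrderedRing 𝕜]
    [AddCommMonoid E] [Module 𝕜 E] [Fintype Ω] {Q : κ → Ω → 𝕜} {u : ι → E → 𝕜}
    (hQ : ∀ j ω, 0 ≤ Q j ω) (hu : ∀ i, ConcaveOn 𝕜 univ (u i)) :
    ConcaveOn 𝕜 univ (expectedUtility Q u) := by
  have component_concave (ij : ι × κ) : ConcaveOn 𝕜 univ (expectedUtility Q u · ij) :=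
    concaveOn_finsetSum convex_univ fun ω _ ↦
      ((hu ij.1).comp_linearMap (LinearMap.proj ω : (Ω → E) →ₗ[𝕜] E)).smul (hQ ij.2 ω)
  exact ⟨convex_univ, fun _ hW _ hZ _ _ ha hb hab ij ↦
    (component_concave ij).2 hW hZ ha hb hab⟩

end Concave

theorem convexHull_sub_Ici_add_singleton_subset {𝕜 F : Type*} [Semiring 𝕜] [PartialOrder 𝕜]
    [AddCommGroup F] [Preorder F] [IsOrderedAddMonoid F] [Module 𝕜 F]
    {s L : Set F} {c : F} (hL : Convex 𝕜 L) (hlower : IsLowerSet L) (hs : ∀ v ∈ s, v + c ∈ L) :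
    convexHull 𝕜 s - Ici 0 + {c} ⊆ L := by
  have hull_subset : convexHull 𝕜 s ⊆ (· + c) ⁻¹' L :=
    convexHull_min hs (hL.translate_preimage_left c)
  rintro _ ⟨_, ⟨v, hv, y, hy, rfl⟩, _, rfl, rfl⟩
  exact hlower (add_le_add_left (sub_le_self v hy) _) (hull_subset hv)

section ValueSet

variable {𝕜 X E F : Type*}

/-- The utility vectors attainable from the outcomes in `K` combined with the claim `C`: those
dominated by `U (W + C)` for some `W ∈ K`. -/
def attainableSet [Add E] [LE F] (U : E → F) (K : Set E) (C : E) : Set F :=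
  {v | ∃ W ∈ K, v ≤ U (W + C)}

/-- The value set `V(x, C)` of the utility maximization problem with claim `C`, where `K` is the
set `A(x)` of outcomes available from the endowment `x`. -/
def valueSet [Add E] [LE F] [TopologicalSpace F] (U : E → F) (K : Set E) (C : E) : Set F :=
  closure (attainableSet U K C)

/-- The set-valued buy price of the claim `C` for an agent with initial endowment `x₀`: the prices
at which buying `C` does not shrink the value set. -/
def buyPrice [Sub X] [AddZeroClass E] [LE F] [TopologicalSpace F] (U : E → F) (A : X → Set E)
    (x₀ : X) (C : E) : Set X :=
  {p | valueSet U (A x₀) 0 ⊆ valueSet U (A (x₀ - p)) C}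

theorem isLowerSet_attainableSet [Add E] [Preorder F] (U : E → F) (K : Set E) (C : E) :
    IsLowerSet (attainableSet U K C) :=
  fun _ _ hle ⟨W, hW, hv⟩ ↦ ⟨W, hW, hle.trans hv⟩

theorem convex_attainableSet [Semiring 𝕜] [PartialOrder 𝕜] [AddCommMonoid E] [Module 𝕜 E]
    [AddCommMonoid F] [PartialOrder F] [IsOrderedAddMonoid F] [Module 𝕜 F] [PosSMulMono 𝕜 F]
    {U : E → F} {K : Set E} (hU : ConcaveOn 𝕜 univ U) (hK : Convex 𝕜 K) (C : E) :
    Convex 𝕜 (attainableSet U K C) := by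
  have shifted_concave : ConcaveOn 𝕜 K (fun W ↦ U (W + C)) :=
    (hU.translate_left C).subset (subset_univ K) hK
  have image_hypograph : LinearMap.snd 𝕜 E F '' {q | q.1 ∈ K ∧ q.2 ≤ U (q.1 + C)} =
      attainableSet U K C := by
    ext v
    simp [attainableSet]
  exact image_hypograph ▸ shifted_concave.convex_hypograph.linear_image (LinearMap.snd 𝕜 E F)

theorem stmt18_general [Semiring 𝕜] [PartialOrder 𝕜] [Sub X] [AddCommMonoid E] [Module 𝕜 E]
    [AddCommGroup F] [PartialOrder F] [IsOrderedAddMonoid F] [Module 𝕜 F] [PosSMulMono 𝕜 F]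
    [TopologicalSpace F] {U : E → F} {A : X → Set E} {x₀ p : X} {C : E} {s : Set F} {c : F}
    (hU : ConcaveOn 𝕜 univ U) (hA : Convex 𝕜 (A (x₀ - p)))
    (happrox : valueSet U (A x₀) 0 ⊆ convexHull 𝕜 s - Ici 0 + {c})
    (hs : ∀ v ∈ s, ∃ W ∈ A (x₀ - p), v + c ≤ U (W + C)) :
    p ∈ buyPrice U A x₀ C :=
  calc valueSet U (A x₀) 0
      ⊆ convexHull 𝕜 s - Ici 0 + {c} := happrox
    _ ⊆ attainableSet U (A (x₀ - p)) C := convexHull_sub_Ici_add_singleton_subset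
        (convex_attainableSet hU hA C) (isLowerSet_attainableSet U _ C) hs
    _ ⊆ valueSet U (A (x₀ - p)) C := subset_closure

end ValueSet

theorem stmt18
    {d r s : ℕ} (hd : 0 < d) (hr : 0 < r) (hs : 0 < s)
    {Ω : Type} [Fintype Ω] [Nonempty Ω]
    (Q : Fin s → Ω → ℝ)
    (hQ0 : ∀ j ω, 0 ≤ Q j ω) (hQ1 : ∀ j, ∑ ω : Ω, Q j ω = 1)
    (u : Fin r → (Fin d → ℝ) → ℝ)
    (hcont : ∀ i, Continuous (u i))
    (hconc : ∀ i, ConcaveOn ℝ Set.univ (u i))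
    (hmono : ∀ i, Monotone (u i))
    (hstrict : ∀ i (x y : Fin d → ℝ), (∀ k, x k < y k) → u i x < u i y)
    (A : (Fin d → ℝ) → Set (Ω → Fin d → ℝ))
    (hAconv : ∀ x, Convex ℝ (A x))
    (x0 : Fin d → ℝ) :
    let U : (Ω → Fin d → ℝ) → (Fin r × Fin s → ℝ) :=
      fun W ij => ∑ ω : Ω, Q ij.2 ω * u ij.1 (W ω)
    let V : (Fin d → ℝ) → (Ω → Fin d → ℝ) → Set (Fin r × Fin s → ℝ) :=
      fun x C => closure {v | ∃ W ∈ A x, v ≤ U (W + C)}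
    let Pb : (Ω → Fin d → ℝ) → Set (Fin d → ℝ) :=
      fun C => {p | V x0 0 ⊆ V (x0 - p) C}
    let Ps : (Ω → Fin d → ℝ) → Set (Fin d → ℝ) :=
      fun C => {p | V x0 0 ⊆ V (x0 + p) (-C)}
    ∀ (C : Ω → Fin d → ℝ) (ε : ℝ), 0 < ε →
      ∀ k : Fin r × Fin s → ℝ, (∀ ij, 0 < k ij) →
      ∀ (l : ℕ) (X : Fin l → Ω → Fin d → ℝ), (∀ i, X i ∈ A x0) →
        V x0 0 ⊆ convexHull ℝ (Set.range fun i => U (X i))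
            - {y : Fin r × Fin s → ℝ | 0 ≤ y} + {ε • k} →
        ∀ p : Fin d → ℝ,
          (∀ i : Fin l, ∃ W ∈ A (x0 - p), U (X i) + ε • k ≤ U (W + C)) →
          p ∈ Pb C := by
  intro U V _ _ C ε _ k _ l X _ happrox p hp
  exact stmt18_general (concaveOn_expectedUtility hQ0 hconc) (hAconv _) happrox
    (forall_mem_range.2 hp)
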